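/- Suppose f, f', ..., f^{(r-1)} are absolutely continuous on [-1,1], f^{(r)} has bounded variation, and U_r = ∫_{-1}^1 |f^{(r+1)}(x)| dx < ∞. Then for all n ≥ r+1, the Chebyshev coefficients satisfy |a_n| ≤ 2U_r / (π · ∏_{j=0}^{r} (n - r + 2j)). -/

import Mathlib

open MeasureTheory Polynomial Polynomial.Chebyshev

/-!
Write `x = cos θ`. Since `sin (n θ)` has `x`-derivative `-n T_n(x) / √(1 - x²)` and vanishes at
`x = ±1`, one integration by parts gives `n a_n(f) = (2/π) ∫ f'(x) sin (n θ) dx`, which yields the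
bound for `r = 0`. Expanding `sin (n θ) = (cos ((n-1)θ) - cos ((n+1)θ)) / (2 sin θ)` instead gives
`2n a_n(f) = a_{n-1}(f') - a_{n+1}(f')`. Induction on `r` then closes because the factors
`n - r - 1 + 2j`, `j ≤ r + 1`, lose their last or first member in the bounds for `a_{n-1}(f')` and
`a_{n+1}(f')`, and these two members add up to `2n`.
-/

section IndefiniteIntegral

open Set intervalIntegral

variable {a b : ℝ} {g g' h h' : ℝ → ℝ}

/-- `g` is an indefinite integral of the integrable function `g'` on `[a, b]`; equivalently, `g` is
absolutely continuous on `[a, b]` with derivative `g'` almost everywhere. Neither function is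
constrained outside `[a, b]`. -/
structure IsIndefiniteIntegral (g g' : ℝ → ℝ) (a b : ℝ) : Prop where
  intervalIntegrable : IntervalIntegrable g' volume a b
  eq_add_integral : ∀ x ∈ uIcc a b, g x = g a + ∫ t in a..x, g' t

namespace IsIndefiniteIntegral

theorem of_hasDerivAt (hcont : ContinuousOn g (uIcc a b))
    (hderiv : ∀ x ∈ uIoo a b, HasDerivAt g (g' x) x) (hint : IntervalIntegrable g' volume a b) :
    IsIndefiniteIntegral g g' a b where
  intervalIntegrable := hint
  eq_add_integral x hx := by
    have hsub : uIcc a x ⊆ uIcc a b := uIcc_subset_uIcc_left hx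
    rw [integral_eq_sub_of_hasDeriv_right (hcont.mono hsub)
      (fun y hy => (hderiv y ?_).hasDerivWithinAt) (hint.mono_set hsub)]
    · ring
    · have hIoo := interior_mono hsub
      simp only [uIcc, interior_Icc] at hIoo
      exact hIoo hy

theorem absolutelyContinuousOnInterval (hg : IsIndefiniteIntegral g g' a b) :
    AbsolutelyContinuousOnInterval g a b := by
  refine (hg.intervalIntegrable.absolutelyContinuousOnInterval_intervalIntegral
    left_mem_uIcc).congr' ?_
  filter_upwards [Filter.mem_inf_of_right (Filter.mem_principal_self _)] with E hE
  refine Finset.sum_congr rfl fun i hi => ?_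
  have hmem := hE.1 i hi
  rw [hg.eq_add_integral _ hmem.1, hg.eq_add_integral _ hmem.2, dist_add_left]

theorem continuousOn (hg : IsIndefiniteIntegral g g' a b) : ContinuousOn g (uIcc a b) :=
  hg.absolutelyContinuousOnInterval.continuousOn

theorem ae_hasDerivAt (hg : IsIndefiniteIntegral g g' a b) :
    ∀ᵐ x, x ∈ uIoc a b → HasDerivAt g (g' x) x := by
  filter_upwards [hg.intervalIntegrable.ae_hasDerivAt_integral, volume.ae_ne (a ⊔ b)]
    with x hx hne hmem
  have hnhds : uIcc a b ∈ nhds x := Icc_mem_nhds hmem.1 (lt_of_le_of_ne hmem.2 hne)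
  refine ((hx (uIoc_subset_uIcc hmem) a left_mem_uIcc).const_add (g a)).congr_of_eventuallyEq ?_
  filter_upwards [hnhds] with y hy using hg.eq_add_integral y hy

theorem integral_mul_eq_sub (hg : IsIndefiniteIntegral g g' a b)
    (hh : IsIndefiniteIntegral h h' a b) :
    ∫ x in a..b, g x * h' x = g b * h b - g a * h a - ∫ x in a..b, g' x * h x := by
  have hderiv_h : ∫ x in a..b, g x * deriv h x = ∫ x in a..b, g x * h' x := by
    refine integral_congr_ae ?_
    filter_upwards [hh.ae_hasDerivAt] with x hx hmem
    rw [(hx hmem).deriv]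
  have hderiv_g : ∫ x in a..b, deriv g x * h x = ∫ x in a..b, g' x * h x := by
    refine integral_congr_ae ?_
    filter_upwards [hg.ae_hasDerivAt] with x hx hmem
    rw [(hx hmem).deriv]
  rw [← hderiv_h, ← hderiv_g]
  exact hg.absolutelyContinuousOnInterval.integral_mul_deriv_eq_deriv_mul
    hh.absolutelyContinuousOnInterval

end IsIndefiniteIntegral

end IndefiniteIntegral

section Chebyshev

open Set Real intervalIntegral

variable {f f' : ℝ → ℝ} {x : ℝ}

theorem eval_T_eq_cos_mul_arccos (n : ℤ) (hx : x ∈ Icc (-1) 1) :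
    (T ℝ n).eval x = cos (n * arccos x) := by
  rw [← T_real_cos, cos_arccos hx.1 hx.2]

theorem sin_mul_arccos_eq_sub_div (n : ℤ) (hx : x ∈ Ioo (-1) 1) :
    sin (n * arccos x) =
      ((T ℝ (n - 1)).eval x - (T ℝ (n + 1)).eval x) / (2 * √(1 - x ^ 2)) := by
  have hx' := Ioo_subset_Icc_self hx
  have hpos : 0 < √(1 - x ^ 2) := sqrt_pos.2 (by nlinarith [hx.1, hx.2])
  rw [eq_div_iff (by positivity), eval_T_eq_cos_mul_arccos _ hx', eval_T_eq_cos_mul_arccos _ hx',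
    ← sin_arccos]
  push_cast
  rw [sub_mul, add_mul, one_mul, cos_sub, cos_add]
  ring

theorem hasDerivAt_sin_mul_arccos (n : ℤ) (hx : x ∈ Ioo (-1) 1) :
    HasDerivAt (fun y => sin (n * arccos y)) (-n * ((T ℝ n).eval x / √(1 - x ^ 2))) x := by
  convert ((hasDerivAt_arccos hx.1.ne' hx.2.ne).const_mul (n : ℝ)).sin using 1
  rw [eval_T_eq_cos_mul_arccos n (Ioo_subset_Icc_self hx)]
  ring

theorem intervalIntegrable_mul_T_div_sqrt (hf : ContinuousOn f (uIcc (-1) 1)) (n : ℤ) :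
    IntervalIntegrable (fun x => f x * (T ℝ n).eval x / √(1 - x ^ 2)) volume (-1) 1 := by
  simpa only [div_eq_mul_inv, sqrt_inv] using
    intervalIntegrable_sqrt_one_sub_sq_inv.continuousOn_mul
      (hf.fun_mul (T ℝ n).continuous.continuousOn)

theorem isIndefiniteIntegral_sin_mul_arccos (n : ℤ) :
    IsIndefiniteIntegral (fun x => sin (n * arccos x))
      (fun x => -n * ((T ℝ n).eval x / √(1 - x ^ 2))) (-1) 1 := by
  refine .of_hasDerivAt (by fun_prop) (fun x hx => ?_) ?_
  · rw [uIoo_of_le (by norm_num)] at hx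
    exact hasDerivAt_sin_mul_arccos n hx
  · simpa only [one_mul] using
      (intervalIntegrable_mul_T_div_sqrt (f := fun _ => 1) continuousOn_const n).const_mul (-n : ℝ)

/-- The Chebyshev coefficient `a_n` of `f`, with the normalisation `2 / π` kept at `n = 0` so that
the recurrence `2n a_n(f) = a_{n-1}(f') - a_{n+1}(f')` has no exceptional case. -/
noncomputable def chebyshevCoeff (f : ℝ → ℝ) (n : ℤ) : ℝ :=
  2 / π * ∫ x in (-1 : ℝ)..1, f x * (T ℝ n).eval x / √(1 - x ^ 2)

theorem mul_chebyshevCoeff (hf : IsIndefiniteIntegral f f' (-1) 1) (n : ℤ) :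
    n * chebyshevCoeff f n = 2 / π * ∫ x in (-1 : ℝ)..1, f' x * sin (n * arccos x) := by
  have hparts := hf.integral_mul_eq_sub (isIndefiniteIntegral_sin_mul_arccos n)
  have hweight : ∫ x in (-1 : ℝ)..1, f x * (-n * ((T ℝ n).eval x / √(1 - x ^ 2))) =
      -n * ∫ x in (-1 : ℝ)..1, f x * (T ℝ n).eval x / √(1 - x ^ 2) := by
    rw [← intervalIntegral.integral_const_mul]
    congr! 2
    ring
  simp only [hweight, arccos_one, arccos_neg_one, mul_zero, sin_zero, sin_int_mul_pi,
    sub_self, zero_sub] at hparts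
  rw [chebyshevCoeff]
  linear_combination -(2 / π) * hparts

theorem integral_mul_sin_mul_arccos (hf : ContinuousOn f (uIcc (-1) 1)) (n : ℤ) :
    2 / π * ∫ x in (-1 : ℝ)..1, f x * sin (n * arccos x) =
      (chebyshevCoeff f (n - 1) - chebyshevCoeff f (n + 1)) / 2 := by
  rw [chebyshevCoeff, chebyshevCoeff, ← mul_sub, mul_div_assoc, ← integral_sub
    (intervalIntegrable_mul_T_div_sqrt hf _) (intervalIntegrable_mul_T_div_sqrt hf _),
    ← intervalIntegral.integral_div]
  congr 1
  refine integral_congr_Ioo_of_le (by norm_num) fun x hx => ?_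
  simp only [sin_mul_arccos_eq_sub_div n hx]
  ring

theorem chebyshevCoeff_eq_sub_div {n : ℤ} (hn : n ≠ 0) (hf : IsIndefiniteIntegral f f' (-1) 1)
    (hf' : ContinuousOn f' (uIcc (-1) 1)) :
    chebyshevCoeff f n =
      (chebyshevCoeff f' (n - 1) - chebyshevCoeff f' (n + 1)) / (2 * n) := by
  have hn' : (n : ℝ) ≠ 0 := mod_cast hn
  rw [eq_div_iff (by simpa using hn')]
  linear_combination 2 * mul_chebyshevCoeff hf n + 2 * integral_mul_sin_mul_arccos hf' n

theorem abs_chebyshevCoeff_le {n : ℤ} (hn : 0 < n) (hf : IsIndefiniteIntegral f f' (-1) 1) :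
    |chebyshevCoeff f n| ≤ 2 * (∫ x in (-1 : ℝ)..1, |f' x|) / (π * n) := by
  have hn' : (0 : ℝ) < n := mod_cast hn
  have hint := hf.intervalIntegrable
  have hsin : |∫ x in (-1 : ℝ)..1, f' x * sin (n * arccos x)| ≤ ∫ x in (-1 : ℝ)..1, |f' x| := by
    refine (abs_integral_le_integral_abs (by norm_num)).trans <|
      integral_mono_on (by norm_num) (hint.mul_continuousOn (by fun_prop)).abs hint.abs
        fun x _ => ?_
    rw [abs_mul]
    exact mul_le_of_le_one_right (abs_nonneg _) (abs_sin_le_one _)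
  calc |chebyshevCoeff f n|
      = |n * chebyshevCoeff f n| / n := by rw [abs_mul, abs_of_pos hn']; field_simp
    _ = 2 / π * |∫ x in (-1 : ℝ)..1, f' x * sin (n * arccos x)| / n := by
        rw [mul_chebyshevCoeff hf, abs_mul, abs_of_pos (by positivity)]
    _ ≤ 2 / π * (∫ x in (-1 : ℝ)..1, |f' x|) / n := by gcongr
    _ = 2 * (∫ x in (-1 : ℝ)..1, |f' x|) / (π * n) := by field_simp

end Chebyshev

theorem inv_prod_range_add_inv_prod_range_succ {K : Type*} [Field K] (u : ℕ → K) (m : ℕ)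
    (hu₀ : u 0 ≠ 0) (hum : u m ≠ 0) :
    (∏ j ∈ Finset.range m, u j)⁻¹ + (∏ j ∈ Finset.range m, u (j + 1))⁻¹ =
      (u 0 + u m) / ∏ j ∈ Finset.range (m + 1), u j := by
  have hfirst := Finset.prod_range_succ u m
  have hlast := Finset.prod_range_succ' u m
  have hinv_first : (∏ j ∈ Finset.range m, u j)⁻¹ = u m / ∏ j ∈ Finset.range (m + 1), u j := by
    rw [hfirst, div_mul_cancel_right₀ hum]
  have hinv_last :
      (∏ j ∈ Finset.range m, u (j + 1))⁻¹ = u 0 / ∏ j ∈ Finset.range (m + 1), u j := by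
    rw [hlast, div_mul_cancel_right₀ hu₀]
  rw [hinv_first, hinv_last, ← add_div, add_comm]

theorem inv_prod_sub_one_add_inv_prod_add_one (r : ℕ) {x : ℝ} (hx : r + 1 < x) :
    (∏ j ∈ Finset.range (r + 1), (x - 1 - r + 2 * j))⁻¹ +
        (∏ j ∈ Finset.range (r + 1), (x + 1 - r + 2 * j))⁻¹ =
      2 * x / ∏ j ∈ Finset.range (r + 2), (x - (r + 1 : ℕ) + 2 * j) := by
  convert inv_prod_range_add_inv_prod_range_succ
    (fun j : ℕ => x - (r + 1 : ℕ) + 2 * (j : ℝ)) (r + 1) ?_ ?_ using 2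
  · congr! 2; push_cast; ring
  · congr! 2; push_cast; ring
  · push_cast; ring
  · push_cast; linarith
  · push_cast; linarith

theorem chebyshev_coeff_bound_Ur_general (r : ℕ) (F : ℕ → ℝ → ℝ)
    (hF : ∀ k ≤ r, IsIndefiniteIntegral (F k) (F (k + 1)) (-1) 1) (n : ℤ) (hn : (r : ℤ) < n) :
    |chebyshevCoeff (F 0) n| ≤
      2 * (∫ x in (-1 : ℝ)..1, |F (r + 1) x|) /
        (Real.pi * ∏ j ∈ Finset.range (r + 1), ((n : ℝ) - r + 2 * j)) := by
  induction r generalizing F n with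
  | zero => simpa using abs_chebyshevCoeff_le (by simpa using hn) (hF 0 le_rfl)
  | succ r ih =>
    push_cast at hn
    have hnr : (r : ℝ) + 1 < n := mod_cast hn
    have hn0 : (0 : ℝ) < n := by linarith [r.cast_nonneg (α := ℝ)]
    have hF' (k : ℕ) (hk : k ≤ r) : IsIndefiniteIntegral (F (k + 1)) (F (k + 2)) (-1) 1 :=
      hF (k + 1) (by omega)
    have hpred := ih (fun k => F (k + 1)) hF' (n - 1) (by omega)
    have hsucc := ih (fun k => F (k + 1)) hF' (n + 1) (by omega)
    have hprod := inv_prod_sub_one_add_inv_prod_add_one r hnr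
    push_cast at hpred hsucc
    set U := ∫ x in (-1 : ℝ)..1, |F (r + 1 + 1) x|
    set P₁ := ∏ j ∈ Finset.range (r + 1), ((n : ℝ) - 1 - r + 2 * j)
    set P₂ := ∏ j ∈ Finset.range (r + 1), ((n : ℝ) + 1 - r + 2 * j)
    set P := ∏ j ∈ Finset.range (r + 2), ((n : ℝ) - (r + 1 : ℕ) + 2 * j)
    calc |chebyshevCoeff (F 0) n|
        = |chebyshevCoeff (F 1) (n - 1) - chebyshevCoeff (F 1) (n + 1)| / (2 * n) := by
          rw [chebyshevCoeff_eq_sub_div (by omega) (hF 0 (by omega))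
            (hF' 0 (by omega)).continuousOn, abs_div, abs_of_pos (by positivity : (0 : ℝ) < 2 * n)]
      _ ≤ (2 * U / (Real.pi * P₁) + 2 * U / (Real.pi * P₂)) / (2 * n) := by
          gcongr
          exact (abs_sub _ _).trans (add_le_add hpred hsucc)
      _ = 2 * U / Real.pi * (P₁⁻¹ + P₂⁻¹) / (2 * n) := by ring
      _ = 2 * U / (Real.pi * P) := by rw [hprod]; field_simp

/-- If `f, f', …, f^{(r-1)}` are absolutely continuous on `[-1,1]`, `f^{(r)}` has bounded
variation, and `U_r = ∫_{-1}^1 |f^{(r+1)}| < ∞`, then for all `n ≥ r + 1` the Chebyshev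
coefficients satisfy `|a_n| ≤ 2U_r / (π·∏_{j=0}^{r} (n - r + 2j))`. -/
theorem chebyshev_coeff_bound_Ur (r : ℕ) (f : ℝ → ℝ)
    (hac : ∀ k ≤ r, ∀ x ∈ Set.Icc (-1 : ℝ) 1,
      iteratedDeriv k f x = iteratedDeriv k f (-1) + ∫ t in (-1 : ℝ)..x, iteratedDeriv (k + 1) f t)
    (hint : ∀ k ≤ r, IntervalIntegrable (iteratedDeriv (k + 1) f) volume (-1) 1)
    (hbv : BoundedVariationOn (iteratedDeriv r f) (Set.Icc (-1) 1))
    (n : ℕ) (hn : r + 1 ≤ n) :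
    |(2 / Real.pi) *
        ∫ x in (-1 : ℝ)..1, f x * (T ℝ n).eval x / Real.sqrt (1 - x ^ 2)| ≤
      2 * (∫ x in (-1 : ℝ)..1, |iteratedDeriv (r + 1) f x|) /
        (Real.pi * ∏ j ∈ Finset.range (r + 1), ((n : ℝ) - r + 2 * j)) := by
  have hF : ∀ k ≤ r, IsIndefiniteIntegral (iteratedDeriv k f) (iteratedDeriv (k + 1) f) (-1) 1 :=
    fun k hk => ⟨hint k hk, by simpa [Set.uIcc_of_le] using hac k hk⟩
  simpa [chebyshevCoeff] using
    chebyshev_coeff_bound_Ur_general r (fun k => iteratedDeriv k f) hF n (by exact_mod_cast hn)
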